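/- (Relative Barnard–Carroll–Zhu bijection) Let 𝒰 ⊆ 𝒱 be torsion classes in mod A. Then the map B ↦ T(B) ∨ 𝒰 induces a bijection from the set of isomorphism classes of bricks contained in 𝒰⊥ ∩ 𝒱 to the set of completely join irreducible elements of the interval [𝒰, 𝒱] in tors A (completely join irreducible as elements of the complete lattice [𝒰, 𝒱]). -/

import Mathlib

open CategoryTheory

/-- `𝒯` is a torsion class of finite-dimensional (= finitely generated) left `A`-modules:
a class of finitely generated modules, closed under isomorphism, containing `0`,
closed under quotients and closed under extensions. -/
def IsTorsionClass (A : Type) [Ring A] (𝒯 : Set (ModuleCat.{0} A)) : Prop :=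
  (∀ M ∈ 𝒯, Module.Finite A M) ∧
  (∀ M ∈ 𝒯, ∀ N : ModuleCat.{0} A, Nonempty (M ≃ₗ[A] N) → N ∈ 𝒯) ∧
  (∃ Z ∈ 𝒯, Subsingleton Z) ∧
  (∀ M ∈ 𝒯, ∀ N : ModuleCat.{0} A, ∀ f : M →ₗ[A] N, Function.Surjective f → N ∈ 𝒯) ∧
  (∀ X Y Z : ModuleCat.{0} A, X ∈ 𝒯 → Z ∈ 𝒯 →
    ∀ (f : X →ₗ[A] Y) (g : Y →ₗ[A] Z), Function.Injective f → Function.Surjective g →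
      LinearMap.range f = LinearMap.ker g → Y ∈ 𝒯)

/-- `ℱ` is a torsion-free class: closed under isomorphism, containing `0`,
closed under submodules and closed under extensions. -/
def IsTorsionFreeClass (A : Type) [Ring A] (ℱ : Set (ModuleCat.{0} A)) : Prop :=
  (∀ M ∈ ℱ, Module.Finite A M) ∧
  (∀ M ∈ ℱ, ∀ N : ModuleCat.{0} A, Nonempty (M ≃ₗ[A] N) → N ∈ ℱ) ∧
  (∃ Z ∈ ℱ, Subsingleton Z) ∧
  (∀ M ∈ ℱ, ∀ N : ModuleCat.{0} A, ∀ f : N →ₗ[A] M, Function.Injective f → N ∈ ℱ) ∧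
  (∀ X Y Z : ModuleCat.{0} A, X ∈ ℱ → Z ∈ ℱ →
    ∀ (f : X →ₗ[A] Y) (g : Y →ₗ[A] Z), Function.Injective f → Function.Surjective g →
      LinearMap.range f = LinearMap.ker g → Y ∈ ℱ)

/-- `𝒞⊥ = {Y | Hom(X,Y) = 0 for all X ∈ 𝒞}` (within finite-dimensional modules). -/
def rightPerp (A : Type) [Ring A] (𝒞 : Set (ModuleCat.{0} A)) : Set (ModuleCat.{0} A) :=
  {Y | Module.Finite A Y ∧ ∀ X ∈ 𝒞, ∀ f : X →ₗ[A] Y, f = 0}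

/-- `⊥𝒞 = {X | Hom(X,Y) = 0 for all Y ∈ 𝒞}` (within finite-dimensional modules). -/
def leftPerp (A : Type) [Ring A] (𝒞 : Set (ModuleCat.{0} A)) : Set (ModuleCat.{0} A) :=
  {X | Module.Finite A X ∧ ∀ Y ∈ 𝒞, ∀ f : X →ₗ[A] Y, f = 0}

/-- A brick: a nonzero finite-dimensional module all of whose nonzero endomorphisms
are invertible. -/
def IsBrick (A : Type) [Ring A] (B : ModuleCat.{0} A) : Prop :=
  Module.Finite A B ∧ Nontrivial B ∧ ∀ f : B →ₗ[A] B, f ≠ 0 → Function.Bijective f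

/-- `T(𝒞)`, the smallest torsion class containing `𝒞`. -/
def TgenSet (A : Type) [Ring A] (𝒞 : Set (ModuleCat.{0} A)) : Set (ModuleCat.{0} A) :=
  {X | ∀ 𝒯, IsTorsionClass A 𝒯 → 𝒞 ⊆ 𝒯 → X ∈ 𝒯}

/-- `T(B)`, the smallest torsion class containing the module `B`. -/
def Tgen (A : Type) [Ring A] (B : ModuleCat.{0} A) : Set (ModuleCat.{0} A) :=
  TgenSet A {B}

/-- `F(B)`, the smallest torsion-free class containing the module `B`. -/
def Fgen (A : Type) [Ring A] (B : ModuleCat.{0} A) : Set (ModuleCat.{0} A) :=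
  {X | ∀ ℱ, IsTorsionFreeClass A ℱ → B ∈ ℱ → X ∈ ℱ}

/-- The join of a family of torsion classes in `tors A`: the intersection of all torsion
classes containing every member of the family. -/
def torsJoin (A : Type) [Ring A] (S : Set (Set (ModuleCat.{0} A))) : Set (ModuleCat.{0} A) :=
  {M | ∀ 𝒲, IsTorsionClass A 𝒲 → (∀ 𝒯 ∈ S, 𝒯 ⊆ 𝒲) → M ∈ 𝒲}
/-- A completely join irreducible element of the interval `[𝒰, 𝒱]` in `tors A`:
a torsion class `𝒥` with `𝒰 ⊆ 𝒥 ⊆ 𝒱` possessing a torsion class `𝒥₊` in the interval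
such that, for every torsion class `𝒴` in the interval, `𝒴 ⊊ 𝒥` iff `𝒴 ⊆ 𝒥₊`. -/
def IsCJIInterval (A : Type) [Ring A] (𝒰 𝒱 𝒥 : Set (ModuleCat.{0} A)) : Prop :=
  IsTorsionClass A 𝒥 ∧ 𝒰 ⊆ 𝒥 ∧ 𝒥 ⊆ 𝒱 ∧
  ∃ 𝒥s, IsTorsionClass A 𝒥s ∧ 𝒰 ⊆ 𝒥s ∧ 𝒥s ⊆ 𝒱 ∧
    ∀ 𝒴, IsTorsionClass A 𝒴 → 𝒰 ⊆ 𝒴 → 𝒴 ⊆ 𝒱 → (𝒴 ⊂ 𝒥 ↔ 𝒴 ⊆ 𝒥s)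

/-! Write `𝒥 = T(B) ∨ 𝒰`. A nonzero module of `𝒥` lying in `𝒰⊥` receives a nonzero map from `B`, as
otherwise `𝒥` would be contained in its left perpendicular. If `B ∈ 𝒰⊥` is a brick, applying this
to the image of a nonzero map `X → B` with `X ∈ 𝒥` shows that every such map is onto. Hence the
torsion classes between `𝒰` and `𝒥` that miss `B` are those inside `𝒥 ∩ ⊥B`, which makes `𝒥`
completely join irreducible; and two bricks with the same `𝒥` map onto each other.

Conversely, if `𝒥` is completely join irreducible with lower cover `𝒮`, a quotient of a module of
`𝒥` that is minimal among those outside `𝒮` is a brick of `𝒮⊥`, and it generates `𝒥` over `𝒰`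
because it is not in `𝒮`. -/

lemma exists_eq_comp_of_exact {R M N P Q : Type*} [Ring R] [AddCommGroup M] [Module R M]
    [AddCommGroup N] [Module R N] [AddCommGroup P] [Module R P] [AddCommGroup Q] [Module R Q]
    {f : M →ₗ[R] N} {g : N →ₗ[R] P} (hfg : Function.Exact f g) (hg : Function.Surjective g)
    (u : N →ₗ[R] Q) (hu : u ∘ₗ f = 0) : ∃ v : P →ₗ[R] Q, u = v ∘ₗ g := by
  refine ⟨(LinearMap.range f).liftQ u (LinearMap.range_le_ker_iff.mpr hu) ∘ₗ
    (hfg.linearEquivOfSurjective hg).symm.toLinearMap, ?_⟩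
  ext x
  simp

section TorsionClasses

variable {A : Type} [Ring A]

namespace IsTorsionClass

variable {𝒯 𝒯' : Set (ModuleCat.{0} A)}

lemma finite_of_mem (h𝒯 : IsTorsionClass A 𝒯) {M : ModuleCat.{0} A} (hM : M ∈ 𝒯) :
    Module.Finite A M :=
  h𝒯.1 M hM

lemma mem_of_surjective (h𝒯 : IsTorsionClass A 𝒯) {M N : ModuleCat.{0} A} (hM : M ∈ 𝒯)
    (f : M →ₗ[A] N) (hf : Function.Surjective f) : N ∈ 𝒯 :=
  h𝒯.2.2.2.1 M hM N f hf

lemma mem_of_subsingleton (h𝒯 : IsTorsionClass A 𝒯) (M : ModuleCat.{0} A) [Subsingleton M] :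
    M ∈ 𝒯 := by
  obtain ⟨Z, hZ, -⟩ := h𝒯.2.2.1
  exact h𝒯.mem_of_surjective hZ 0 (Function.surjective_to_subsingleton _)

lemma mem_of_exact (h𝒯 : IsTorsionClass A 𝒯) {X Y Z : ModuleCat.{0} A} (hX : X ∈ 𝒯) (hZ : Z ∈ 𝒯)
    {f : X →ₗ[A] Y} {g : Y →ₗ[A] Z} (hf : Function.Injective f) (hg : Function.Surjective g)
    (hfg : LinearMap.range f = LinearMap.ker g) : Y ∈ 𝒯 :=
  h𝒯.2.2.2.2 X Y Z hX hZ f g hf hg hfg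

lemma mem_of_submodule_of_quotient (h𝒯 : IsTorsionClass A 𝒯) {M : ModuleCat.{0} A}
    (N : Submodule A M) (hN : ModuleCat.of A N ∈ 𝒯) (hMN : ModuleCat.of A (M ⧸ N) ∈ 𝒯) : M ∈ 𝒯 :=
  h𝒯.mem_of_exact hN hMN N.subtype_injective N.mkQ_surjective
    (by rw [Submodule.range_subtype, Submodule.ker_mkQ])

lemma sInter {S : Set (Set (ModuleCat.{0} A))} (hS : ∀ 𝒯 ∈ S, IsTorsionClass A 𝒯)
    (hne : S.Nonempty) : IsTorsionClass A (⋂₀ S) := by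
  obtain ⟨𝒯₀, h𝒯₀⟩ := hne
  refine ⟨fun M hM => (hS 𝒯₀ h𝒯₀).finite_of_mem (hM 𝒯₀ h𝒯₀), ?_,
    ⟨ModuleCat.of A PUnit, fun 𝒯 h𝒯 => (hS 𝒯 h𝒯).mem_of_subsingleton _,
      inferInstanceAs (Subsingleton PUnit)⟩, ?_, ?_⟩
  · rintro M hM N ⟨e⟩ 𝒯 h𝒯
    exact (hS 𝒯 h𝒯).mem_of_surjective (hM 𝒯 h𝒯) e.toLinearMap e.surjective
  · intro M hM N f hf 𝒯 h𝒯
    exact (hS 𝒯 h𝒯).mem_of_surjective (hM 𝒯 h𝒯) f hf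
  · intro X Y Z hX hZ f g hf hg hfg 𝒯 h𝒯
    exact (hS 𝒯 h𝒯).mem_of_exact (hX 𝒯 h𝒯) (hZ 𝒯 h𝒯) hf hg hfg

lemma inter (h𝒯 : IsTorsionClass A 𝒯) (h𝒯' : IsTorsionClass A 𝒯') :
    IsTorsionClass A (𝒯 ∩ 𝒯') := by
  rw [← Set.sInter_pair]
  exact sInter (by simp [h𝒯, h𝒯']) (Set.insert_nonempty _ _)

end IsTorsionClass

lemma isTorsionClass_leftPerp (𝒞 : Set (ModuleCat.{0} A)) : IsTorsionClass A (leftPerp A 𝒞) := by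
  have mem_of_surjective : ∀ M ∈ leftPerp A 𝒞, ∀ N : ModuleCat.{0} A, ∀ f : M →ₗ[A] N,
      Function.Surjective f → N ∈ leftPerp A 𝒞 := by
    rintro M ⟨_, hM⟩ N f hf
    exact ⟨Module.Finite.of_surjective f hf, fun Y hY u =>
      (LinearMap.cancel_right hf).mp (by rw [hM Y hY (u ∘ₗ f), LinearMap.zero_comp])⟩
  refine ⟨fun M hM => hM.1,
    fun M hM N ⟨e⟩ => mem_of_surjective M hM N e.toLinearMap e.surjective,
    ⟨ModuleCat.of A PUnit, ⟨inferInstanceAs (Module.Finite A PUnit), fun Y _ f => ?_⟩,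
      inferInstanceAs (Subsingleton PUnit)⟩, mem_of_surjective, ?_⟩
  · exact Subsingleton.elim (α := PUnit →ₗ[A] Y) f 0
  · rintro X Y Z ⟨_, hX⟩ ⟨_, hZ⟩ f g - hg hfg
    have hexact : Function.Exact f g := LinearMap.exact_iff.mpr hfg.symm
    refine ⟨Module.Finite.of_exact hexact hg, fun C hC u => ?_⟩
    obtain ⟨v, rfl⟩ := exists_eq_comp_of_exact hexact hg u (hX C hC _)
    rw [hZ C hC v, LinearMap.zero_comp]

lemma isTorsionClass_setOf_finite : IsTorsionClass A {M | Module.Finite A M} := by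
  simpa [leftPerp] using isTorsionClass_leftPerp (∅ : Set (ModuleCat.{0} A))

lemma mem_leftPerp_singleton {X Y : ModuleCat.{0} A} :
    X ∈ leftPerp A {Y} ↔ Module.Finite A X ∧ ∀ f : X →ₗ[A] Y, f = 0 := by
  simp [leftPerp]

lemma notMem_leftPerp_singleton_self (M : ModuleCat.{0} A) [Nontrivial M] :
    M ∉ leftPerp A {M} :=
  fun hM => one_ne_zero (α := Module.End A M) ((mem_leftPerp_singleton.mp hM).2 _)

lemma subset_leftPerp_singleton_of_mem_rightPerp {𝒞 : Set (ModuleCat.{0} A)}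
    (h𝒞 : ∀ X ∈ 𝒞, Module.Finite A X) {Y : ModuleCat.{0} A} (hY : Y ∈ rightPerp A 𝒞) :
    𝒞 ⊆ leftPerp A {Y} :=
  fun X hX => mem_leftPerp_singleton.mpr ⟨h𝒞 X hX, hY.2 X hX⟩

lemma mem_rightPerp_of_injective {𝒞 : Set (ModuleCat.{0} A)} {X Y : ModuleCat.{0} A}
    [Module.Finite A X] (hY : Y ∈ rightPerp A 𝒞) {f : X →ₗ[A] Y} (hf : Function.Injective f) :
    X ∈ rightPerp A 𝒞 :=
  ⟨inferInstance, fun C hC u =>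
    (LinearMap.cancel_left hf).mp (by rw [hY.2 C hC (f ∘ₗ u), LinearMap.comp_zero])⟩

lemma rightPerp_anti {𝒞 𝒟 : Set (ModuleCat.{0} A)} (h : 𝒞 ⊆ 𝒟) :
    rightPerp A 𝒟 ⊆ rightPerp A 𝒞 :=
  fun _ hY => ⟨hY.1, fun X hX => hY.2 X (h hX)⟩

lemma isTorsionClass_torsJoin {S : Set (Set (ModuleCat.{0} A))} {𝒱 : Set (ModuleCat.{0} A)}
    (h𝒱 : IsTorsionClass A 𝒱) (hS : ∀ 𝒯 ∈ S, 𝒯 ⊆ 𝒱) : IsTorsionClass A (torsJoin A S) := by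
  have h : torsJoin A S = ⋂₀ {𝒲 | IsTorsionClass A 𝒲 ∧ ∀ 𝒯 ∈ S, 𝒯 ⊆ 𝒲} := by
    ext M
    simp [torsJoin]
  rw [h]
  exact .sInter (fun 𝒲 h𝒲 => h𝒲.1) ⟨𝒱, h𝒱, hS⟩

end TorsionClasses

section JoinWithGenerated

variable {A : Type} [Ring A] {𝒰 𝒱 : Set (ModuleCat.{0} A)} {B : ModuleCat.{0} A}

lemma subset_torsJoin_tgen (𝒰 : Set (ModuleCat.{0} A)) (B : ModuleCat.{0} A) :
    𝒰 ⊆ torsJoin A {Tgen A B, 𝒰} :=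
  fun _ hX _ _ hle => hle 𝒰 (by simp) hX

lemma mem_torsJoin_tgen (𝒰 : Set (ModuleCat.{0} A)) (B : ModuleCat.{0} A) :
    B ∈ torsJoin A {Tgen A B, 𝒰} :=
  fun _ _ hle => hle (Tgen A B) (by simp) fun _ _ hB => hB rfl

lemma tgen_subset (h𝒱 : IsTorsionClass A 𝒱) (hB : B ∈ 𝒱) : Tgen A B ⊆ 𝒱 :=
  fun _ hX => hX 𝒱 h𝒱 (Set.singleton_subset_iff.mpr hB)

lemma torsJoin_tgen_subset (h𝒱 : IsTorsionClass A 𝒱) (hB : B ∈ 𝒱) (h𝒰𝒱 : 𝒰 ⊆ 𝒱) :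
    torsJoin A {Tgen A B, 𝒰} ⊆ 𝒱 :=
  fun _ hX => hX 𝒱 h𝒱 (by simp [tgen_subset h𝒱 hB, h𝒰𝒱])

lemma isTorsionClass_torsJoin_tgen [Module.Finite A B] (h𝒰 : ∀ X ∈ 𝒰, Module.Finite A X) :
    IsTorsionClass A (torsJoin A {Tgen A B, 𝒰}) :=
  isTorsionClass_torsJoin isTorsionClass_setOf_finite <| by
    rintro 𝒯 (rfl | rfl)
    · exact tgen_subset isTorsionClass_setOf_finite ‹Module.Finite A B›
    · exact h𝒰

lemma exists_linearMap_ne_zero_of_mem_torsJoin_tgen [Module.Finite A B]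
    (h𝒰 : ∀ X ∈ 𝒰, Module.Finite A X) {I : ModuleCat.{0} A} [Nontrivial I]
    (hI : I ∈ torsJoin A {Tgen A B, 𝒰}) (hI𝒰 : I ∈ rightPerp A 𝒰) :
    ∃ f : B →ₗ[A] I, f ≠ 0 := by
  by_contra! hBI
  exact notMem_leftPerp_singleton_self I <|
    torsJoin_tgen_subset (isTorsionClass_leftPerp {I})
      (mem_leftPerp_singleton.mpr ⟨inferInstance, hBI⟩)
      (subset_leftPerp_singleton_of_mem_rightPerp h𝒰 hI𝒰) hI

namespace IsBrick

lemma nonempty_linearEquiv_of_surjective (hB : IsBrick A B) {C : Type*} [AddCommGroup C]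
    [Module A C] {f : B →ₗ[A] C} {g : C →ₗ[A] B} (hf : Function.Surjective f)
    (hg : Function.Surjective g) : Nonempty (B ≃ₗ[A] C) := by
  have := hB.2.1
  have hgf : g ∘ₗ f ≠ 0 := LinearMap.ne_zero_of_surjective (hg.comp hf)
  have hf' : Function.Injective f := .of_comp (f := g) (hB.2.2 _ hgf).1
  exact ⟨.ofBijective f ⟨hf', hf⟩⟩

lemma surjective_of_mem_torsJoin_tgen (hB : IsBrick A B) (hB𝒰 : B ∈ rightPerp A 𝒰)
    (h𝒰 : ∀ X ∈ 𝒰, Module.Finite A X) {X : ModuleCat.{0} A}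
    (hX : X ∈ torsJoin A {Tgen A B, 𝒰}) {f : X →ₗ[A] B} (hf : f ≠ 0) :
    Function.Surjective f := by
  have := hB.1
  have hJ := isTorsionClass_torsJoin_tgen (B := B) h𝒰
  let I := ModuleCat.of A (LinearMap.range f)
  have hI : I ∈ torsJoin A {Tgen A B, 𝒰} :=
    hJ.mem_of_surjective hX f.rangeRestrict f.surjective_rangeRestrict
  have : Module.Finite A I := hJ.finite_of_mem hI
  have : Nontrivial I :=
    Submodule.nontrivial_iff_ne_bot.mpr (mt LinearMap.range_eq_bot.mp hf)
  let ι : I →ₗ[A] B := (LinearMap.range f).subtype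
  have hι : Function.Injective ι := Subtype.val_injective
  obtain ⟨g, hg⟩ := exists_linearMap_ne_zero_of_mem_torsJoin_tgen h𝒰 hI
    (mem_rightPerp_of_injective hB𝒰 hι)
  have hιg : ι ∘ₗ g ≠ 0 := fun h =>
    hg ((LinearMap.cancel_left hι).mp (h.trans (LinearMap.comp_zero ι).symm))
  have hι' : Function.Surjective ι := .of_comp (g := g) (hB.2.2 _ hιg).2
  rwa [← LinearMap.range_eq_top, Submodule.range_subtype, LinearMap.range_eq_top] at hι'

lemma exists_surjective_of_mem_torsJoin_tgen (hB : IsBrick A B) (hB𝒰 : B ∈ rightPerp A 𝒰)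
    (h𝒰 : ∀ X ∈ 𝒰, Module.Finite A X) {C : ModuleCat.{0} A} [Module.Finite A C]
    (hC : C ∈ torsJoin A {Tgen A B, 𝒰}) (hBC : B ∈ torsJoin A {Tgen A C, 𝒰}) :
    ∃ f : C →ₗ[A] B, Function.Surjective f := by
  have := hB.2.1
  obtain ⟨f, hf⟩ := exists_linearMap_ne_zero_of_mem_torsJoin_tgen h𝒰 hBC hB𝒰
  exact ⟨f, hB.surjective_of_mem_torsJoin_tgen hB𝒰 h𝒰 hC hf⟩

lemma nonempty_linearEquiv_of_torsJoin_tgen_eq {B' : ModuleCat.{0} A} (hB : IsBrick A B)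
    (hB' : IsBrick A B') (hB𝒰 : B ∈ rightPerp A 𝒰) (hB'𝒰 : B' ∈ rightPerp A 𝒰)
    (h𝒰 : ∀ X ∈ 𝒰, Module.Finite A X)
    (h : torsJoin A {Tgen A B, 𝒰} = torsJoin A {Tgen A B', 𝒰}) : Nonempty (B ≃ₗ[A] B') := by
  have := hB.1
  have := hB'.1
  have hBJ' : B ∈ torsJoin A {Tgen A B', 𝒰} := h ▸ mem_torsJoin_tgen 𝒰 B
  have hB'J : B' ∈ torsJoin A {Tgen A B, 𝒰} := h ▸ mem_torsJoin_tgen 𝒰 B'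
  obtain ⟨f, hf⟩ := hB'.exists_surjective_of_mem_torsJoin_tgen hB'𝒰 h𝒰 hBJ' hB'J
  obtain ⟨g, hg⟩ := hB.exists_surjective_of_mem_torsJoin_tgen hB𝒰 h𝒰 hB'J hBJ'
  exact hB.nonempty_linearEquiv_of_surjective hf hg

lemma ssubset_torsJoin_tgen_iff (hB : IsBrick A B) (hB𝒰 : B ∈ rightPerp A 𝒰)
    {𝒴 : Set (ModuleCat.{0} A)} (h𝒴 : IsTorsionClass A 𝒴) (h𝒰𝒴 : 𝒰 ⊆ 𝒴) :
    𝒴 ⊂ torsJoin A {Tgen A B, 𝒰} ↔ 𝒴 ⊆ torsJoin A {Tgen A B, 𝒰} ∩ leftPerp A {B} := by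
  have := hB.2.1
  have h𝒰 : ∀ X ∈ 𝒰, Module.Finite A X := fun X hX => h𝒴.finite_of_mem (h𝒰𝒴 hX)
  rw [Set.subset_inter_iff, ssubset_iff_subset_not_subset]
  refine and_congr_right fun h𝒴J => ⟨fun hJ𝒴 X hX => ?_, fun h𝒴B hJ𝒴 => ?_⟩
  · refine mem_leftPerp_singleton.mpr ⟨h𝒴.finite_of_mem hX, fun f => ?_⟩
    by_contra hf
    have hfs := hB.surjective_of_mem_torsJoin_tgen hB𝒰 h𝒰 (h𝒴J hX) hf
    exact hJ𝒴 (torsJoin_tgen_subset h𝒴 (h𝒴.mem_of_surjective hX f hfs) h𝒰𝒴)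
  · exact notMem_leftPerp_singleton_self B (h𝒴B (hJ𝒴 (mem_torsJoin_tgen 𝒰 B)))

lemma isCJIInterval_torsJoin_tgen (hB : IsBrick A B) (hB𝒰 : B ∈ rightPerp A 𝒰) (hB𝒱 : B ∈ 𝒱)
    (h𝒱 : IsTorsionClass A 𝒱) (h𝒰𝒱 : 𝒰 ⊆ 𝒱) :
    IsCJIInterval A 𝒰 𝒱 (torsJoin A {Tgen A B, 𝒰}) := by
  have := hB.1
  have h𝒰 : ∀ X ∈ 𝒰, Module.Finite A X := fun X hX => h𝒱.finite_of_mem (h𝒰𝒱 hX)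
  have hJ := isTorsionClass_torsJoin_tgen (B := B) h𝒰
  have h𝒰J := subset_torsJoin_tgen 𝒰 B
  have hJ𝒱 := torsJoin_tgen_subset h𝒱 hB𝒱 h𝒰𝒱
  exact ⟨hJ, h𝒰J, hJ𝒱, _, hJ.inter (isTorsionClass_leftPerp {B}),
    Set.subset_inter h𝒰J (subset_leftPerp_singleton_of_mem_rightPerp h𝒰 hB𝒰),
    Set.inter_subset_left.trans hJ𝒱,
    fun 𝒴 h𝒴 h𝒰𝒴 _ => hB.ssubset_torsJoin_tgen_iff hB𝒰 h𝒴 h𝒰𝒴⟩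

end IsBrick

end JoinWithGenerated

section MinimalNonmembers

variable {A : Type} [Ring A] {𝒮 : Set (ModuleCat.{0} A)}

/-- `M` lies outside `𝒮`, but all its proper quotients lie in `𝒮`. For a torsion class `𝒮` over an
artinian ring, the finitely generated such modules are bricks in `𝒮⊥`. Proper quotients are encoded
as quotients by nonzero submodules. -/
def IsMinimalNonmember (𝒮 : Set (ModuleCat.{0} A)) (M : ModuleCat.{0} A) : Prop :=
  M ∉ 𝒮 ∧ ∀ N : Submodule A M, N ≠ ⊥ → ModuleCat.of A (M ⧸ N) ∈ 𝒮

lemma exists_isMinimalNonmember_quotient (h𝒮 : IsTorsionClass A 𝒮) {X : ModuleCat.{0} A}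
    [IsNoetherian A X] (hX : X ∉ 𝒮) :
    ∃ N : Submodule A X, IsMinimalNonmember 𝒮 (ModuleCat.of A (X ⧸ N)) := by
  have hbot : ModuleCat.of A (X ⧸ (⊥ : Submodule A X)) ∉ 𝒮 := fun h =>
    let e := Submodule.quotEquivOfEqBot (⊥ : Submodule A X) rfl
    hX (h𝒮.mem_of_surjective h e.toLinearMap e.surjective)
  obtain ⟨N, hN⟩ :=
    exists_maximal_of_wellFoundedGT (fun N : Submodule A X => ModuleCat.of A (X ⧸ N) ∉ 𝒮) ⟨⊥, hbot⟩
  refine ⟨N, hN.prop, fun K hK => ?_⟩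
  let q : X →ₗ[A] (X ⧸ N) ⧸ K := K.mkQ ∘ₗ N.mkQ
  have hNq : N < LinearMap.ker q :=
    calc N = Submodule.comap N.mkQ ⊥ := by rw [Submodule.comap_bot, Submodule.ker_mkQ]
      _ < Submodule.comap N.mkQ K :=
        Submodule.comap_strictMono_of_surjective N.mkQ_surjective (bot_lt_iff_ne_bot.mpr hK)
      _ = LinearMap.ker q := by rw [LinearMap.ker_comp, Submodule.ker_mkQ]
  have hq : ModuleCat.of A (X ⧸ LinearMap.ker q) ∈ 𝒮 := not_not.mp (hN.not_prop_of_gt hNq)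
  let e := q.quotKerEquivOfSurjective (K.mkQ_surjective.comp N.mkQ_surjective)
  exact h𝒮.mem_of_surjective hq e.toLinearMap e.surjective

namespace IsMinimalNonmember

variable {M : ModuleCat.{0} A}

lemma nontrivial (hM : IsMinimalNonmember 𝒮 M) (h𝒮 : IsTorsionClass A 𝒮) : Nontrivial M := by
  by_contra hM'
  rw [not_nontrivial_iff_subsingleton] at hM'
  exact hM.1 (h𝒮.mem_of_subsingleton M)

lemma mem_rightPerp (hM : IsMinimalNonmember 𝒮 M) (h𝒮 : IsTorsionClass A 𝒮) [Module.Finite A M] :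
    M ∈ rightPerp A 𝒮 := by
  refine ⟨inferInstance, fun Y hY f => ?_⟩
  by_contra hf
  refine hM.1 (h𝒮.mem_of_submodule_of_quotient (LinearMap.range f) ?_ ?_)
  · exact h𝒮.mem_of_surjective hY f.rangeRestrict f.surjective_rangeRestrict
  · exact hM.2 _ (mt LinearMap.range_eq_bot.mp hf)

lemma injective_of_ne_zero (hM : IsMinimalNonmember 𝒮 M)
    {Y : ModuleCat.{0} A} (hY : Y ∈ rightPerp A 𝒮) {f : M →ₗ[A] Y} (hf : f ≠ 0) :
    Function.Injective f := by
  rw [← LinearMap.ker_eq_bot]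
  by_contra hker
  have hfbar : (LinearMap.ker f).liftQ f le_rfl = 0 := hY.2 _ (hM.2 _ hker) _
  exact hf (by rw [← Submodule.liftQ_mkQ (LinearMap.ker f) f le_rfl, hfbar, LinearMap.zero_comp])

lemma isBrick (hM : IsMinimalNonmember 𝒮 M) (h𝒮 : IsTorsionClass A 𝒮) [Module.Finite A M]
    [IsArtinian A M] : IsBrick A M :=
  ⟨inferInstance, hM.nontrivial h𝒮, fun f hf =>
    IsArtinian.bijective_of_injective_endomorphism f
      (hM.injective_of_ne_zero (hM.mem_rightPerp h𝒮) hf)⟩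

end IsMinimalNonmember

lemma exists_isBrick_of_not_subset [IsArtinianRing A] {𝒥 : Set (ModuleCat.{0} A)}
    (h𝒥 : IsTorsionClass A 𝒥) (h𝒮 : IsTorsionClass A 𝒮) (h : ¬ 𝒥 ⊆ 𝒮) :
    ∃ B ∈ 𝒥, B ∉ 𝒮 ∧ IsBrick A B ∧ B ∈ rightPerp A 𝒮 := by
  obtain ⟨X, hX𝒥, hX𝒮⟩ := Set.not_subset.mp h
  have := h𝒥.finite_of_mem hX𝒥
  obtain ⟨N, hN⟩ := exists_isMinimalNonmember_quotient h𝒮 hX𝒮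
  have hN𝒥 : ModuleCat.of A (X ⧸ N) ∈ 𝒥 := h𝒥.mem_of_surjective hX𝒥 N.mkQ N.mkQ_surjective
  have := h𝒥.finite_of_mem hN𝒥
  exact ⟨_, hN𝒥, hN.1, hN.isBrick h𝒮, hN.mem_rightPerp h𝒮⟩

lemma IsCJIInterval.exists_isBrick_eq_torsJoin_tgen [IsArtinianRing A]
    {𝒰 𝒱 𝒥 : Set (ModuleCat.{0} A)} (h𝒥 : IsCJIInterval A 𝒰 𝒱 𝒥) :
    ∃ B, IsBrick A B ∧ B ∈ rightPerp A 𝒰 ∧ B ∈ 𝒱 ∧ 𝒥 = torsJoin A {Tgen A B, 𝒰} := by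
  obtain ⟨hJ, h𝒰J, hJ𝒱, 𝒮, h𝒮, h𝒰𝒮, h𝒮𝒱, hcover⟩ := h𝒥
  have h𝒮J : 𝒮 ⊂ 𝒥 := (hcover 𝒮 h𝒮 h𝒰𝒮 h𝒮𝒱).mpr subset_rfl
  obtain ⟨B, hBJ, hB𝒮, hB, hBperp⟩ := exists_isBrick_of_not_subset hJ h𝒮 h𝒮J.2
  refine ⟨B, hB, rightPerp_anti h𝒰𝒮 hBperp, hJ𝒱 hBJ, ?_⟩
  have := hB.1
  have hBtors : IsTorsionClass A (torsJoin A {Tgen A B, 𝒰}) :=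
    isTorsionClass_torsJoin_tgen fun X hX => hJ.finite_of_mem (h𝒰J hX)
  have hle : torsJoin A {Tgen A B, 𝒰} ⊆ 𝒥 := torsJoin_tgen_subset hJ hBJ h𝒰J
  by_contra hne
  have hle𝒮 : torsJoin A {Tgen A B, 𝒰} ⊆ 𝒮 :=
    (hcover _ hBtors (subset_torsJoin_tgen 𝒰 B) (hle.trans hJ𝒱)).mp
      (hle.ssubset_of_ne (Ne.symm hne))
  exact hB𝒮 (hle𝒮 (mem_torsJoin_tgen 𝒰 B))

end MinimalNonmembers

theorem relative_brick_cji_bijection_general {A : Type} [Ring A] [IsArtinianRing A]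
    {𝒰 𝒱 : Set (ModuleCat.{0} A)} (h𝒱 : IsTorsionClass A 𝒱) (h𝒰𝒱 : 𝒰 ⊆ 𝒱) :
    (∀ B, IsBrick A B → B ∈ rightPerp A 𝒰 → B ∈ 𝒱 →
      IsCJIInterval A 𝒰 𝒱 (torsJoin A {Tgen A B, 𝒰})) ∧
    (∀ 𝒥, IsCJIInterval A 𝒰 𝒱 𝒥 →
      ∃ B, IsBrick A B ∧ B ∈ rightPerp A 𝒰 ∧ B ∈ 𝒱 ∧ 𝒥 = torsJoin A {Tgen A B, 𝒰}) ∧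
    (∀ B B', IsBrick A B → IsBrick A B' →
      B ∈ rightPerp A 𝒰 → B ∈ 𝒱 → B' ∈ rightPerp A 𝒰 → B' ∈ 𝒱 →
      torsJoin A {Tgen A B, 𝒰} = torsJoin A {Tgen A B', 𝒰} →
      Nonempty (B ≃ₗ[A] B')) :=
  ⟨fun _ hB hB𝒰 hB𝒱 => hB.isCJIInterval_torsJoin_tgen hB𝒰 hB𝒱 h𝒱 h𝒰𝒱,
    fun _ h𝒥 => h𝒥.exists_isBrick_eq_torsJoin_tgen,
    fun _ _ hB hB' hB𝒰 _ hB'𝒰 _ => hB.nonempty_linearEquiv_of_torsJoin_tgen_eq hB' hB𝒰 hB'𝒰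
      fun _ hX => h𝒱.finite_of_mem (h𝒰𝒱 hX)⟩

theorem relative_brick_cji_bijection
    (k A : Type) [Field k] [Ring A] [Algebra k A] [FiniteDimensional k A]
    (𝒰 𝒱 : Set (ModuleCat.{0} A))
    (h𝒰 : IsTorsionClass A 𝒰) (h𝒱 : IsTorsionClass A 𝒱) (h𝒰𝒱 : 𝒰 ⊆ 𝒱) :
    (∀ B, IsBrick A B → B ∈ rightPerp A 𝒰 → B ∈ 𝒱 →
      IsCJIInterval A 𝒰 𝒱 (torsJoin A {Tgen A B, 𝒰})) ∧
    (∀ 𝒥, IsCJIInterval A 𝒰 𝒱 𝒥 →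
      ∃ B, IsBrick A B ∧ B ∈ rightPerp A 𝒰 ∧ B ∈ 𝒱 ∧ 𝒥 = torsJoin A {Tgen A B, 𝒰}) ∧
    (∀ B B', IsBrick A B → IsBrick A B' →
      B ∈ rightPerp A 𝒰 → B ∈ 𝒱 → B' ∈ rightPerp A 𝒰 → B' ∈ 𝒱 →
      torsJoin A {Tgen A B, 𝒰} = torsJoin A {Tgen A B', 𝒰} →
      Nonempty (B ≃ₗ[A] B')) := by
  have : IsArtinianRing A := IsArtinianRing.of_finite k A
  exact relative_brick_cji_bijection_general h𝒱 h𝒰𝒱
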